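/- arXiv:1210.0420 — 8 statements merged into one kernel-verified Lean document; each statement's English description precedes it below -/
import Mathlib

section
/- Let k ≥ 1 and let V_1, …, V_k ⊆ ℝ^n be varieties (each V_i is the common zero set of finitely many polynomials in MvPolynomial (Fin n) ℝ). If C ⊆ V_1 ∪ … ∪ V_k is essentially convex, then there exists an i ≤ k such that C ⊆ V_i. -/
/-!
The polynomials vanishing on a nonempty essentially convex set `C` form a prime ideal: let `f p ≠ 0`
and `g q ≠ 0` with `p, q ∈ C`. Restricted to the line through `p` and `q`, both `f` and `g` are
nonzero univariate polynomials, so they have finitely many zeros on it; since only finitely many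
points of the segment are missing from `C`, some point of `C` is a zero of neither
(`EssentiallyConvex.exists_eval_ne_zero`).

If `C` is contained in no `V i`, pick for each `i` a polynomial `f i` that vanishes on `V i` but
not on all of `C`. By primality, `∏ i, f i` does not vanish on all of `C`, so some point of `C`
lies outside every `V i`.
-/

/-- A set is essentially convex if for all `p, q` in the set, only finitely many
points of the closed segment between `p` and `q` fail to belong to the set. -/
def EssentiallyConvex {n : ℕ} (S : Set (Fin n → ℝ)) : Prop :=
  ∀ p ∈ S, ∀ q ∈ S, (segment ℝ p q \ S).Finite

/-- A real algebraic variety: the common zero set of finitely many polynomials. -/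
def IsVariety {n : ℕ} (V : Set (Fin n → ℝ)) : Prop :=
  ∃ (m : ℕ) (p : Fin m → MvPolynomial (Fin n) ℝ),
    V = {x : Fin n → ℝ | ∀ i : Fin m, MvPolynomial.eval x (p i) = 0}


/-- The restriction of `f` to the line through `p` and `q`, as a univariate polynomial in the
parameter that is `0` at `p` and `1` at `q`. -/
noncomputable def restrictLine {n : ℕ} (p q : Fin n → ℝ) (f : MvPolynomial (Fin n) ℝ) :
    Polynomial ℝ :=
  MvPolynomial.aeval
    (fun i => Polynomial.C (q i - p i) * Polynomial.X + Polynomial.C (p i)) f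

lemma eval_restrictLine {n : ℕ} (p q : Fin n → ℝ) (f : MvPolynomial (Fin n) ℝ) (t : ℝ) :
    (restrictLine p q f).eval t = MvPolynomial.eval (AffineMap.lineMap p q t) f := by
  unfold restrictLine
  induction f using MvPolynomial.induction_on with
  | C a => simp
  | add f g hf hg => simp only [map_add, Polynomial.eval_add, hf, hg]
  | mul_X f i hf =>
    simp only [map_mul, Polynomial.eval_mul, hf, MvPolynomial.aeval_X, MvPolynomial.eval_X]
    simp [AffineMap.lineMap_apply, mul_comm t]

/-- Primality of the vanishing ideal of an essentially convex set, in contrapositive form. -/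
lemma EssentiallyConvex.exists_eval_ne_zero {n : ℕ} {C : Set (Fin n → ℝ)}
    (hC : EssentiallyConvex C) {f g : MvPolynomial (Fin n) ℝ} {p q : Fin n → ℝ}
    (hp : p ∈ C) (hq : q ∈ C) (hf : MvPolynomial.eval p f ≠ 0)
    (hg : MvPolynomial.eval q g ≠ 0) :
    ∃ c ∈ C, MvPolynomial.eval c (f * g) ≠ 0 := by
  rcases eq_or_ne p q with rfl | hpq
  · exact ⟨p, hp, by simp [hf, hg]⟩
  have hF : restrictLine p q f ≠ 0 := fun h => hf <| by
    simpa [h] using (eval_restrictLine p q f 0).symm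
  have hG : restrictLine p q g ≠ 0 := fun h => hg <| by
    simpa [h] using (eval_restrictLine p q g 1).symm
  have hroots := Polynomial.finite_setOfPred_isRoot (mul_ne_zero hF hG)
  have hmissing := (hC p hp q hq).preimage
    ((AffineMap.lineMap_injective ℝ hpq).injOn (s := _))
  obtain ⟨t, ht, htn⟩ :=
    (Set.Icc_infinite (zero_lt_one' ℝ)).exists_notMem_finite (hroots.union hmissing)
  simp only [Set.mem_union, not_or, Set.mem_ofPred_eq, Polynomial.IsRoot.def,
    Polynomial.eval_mul, eval_restrictLine] at htn
  refine ⟨AffineMap.lineMap p q t, ?_, by simpa using htn.1⟩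
  by_contra hmem
  refine htn.2 ⟨?_, hmem⟩
  rw [segment_eq_image_lineMap]
  exact Set.mem_image_of_mem _ ht

theorem essentiallyConvex_subset_union_varieties
    (n k : ℕ) (hk : 1 ≤ k) (V : Fin k → Set (Fin n → ℝ))
    (hV : ∀ i, IsVariety (V i))
    (C : Set (Fin n → ℝ)) (hC : C ⊆ ⋃ i, V i)
    (hec : EssentiallyConvex C) :
    ∃ i : Fin k, C ⊆ V i := by
  by_contra! hne
  have key : ∀ i, ∃ f : MvPolynomial (Fin n) ℝ,
      (∀ x ∈ V i, MvPolynomial.eval x f = 0) ∧ ∃ c ∈ C, MvPolynomial.eval c f ≠ 0 := by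
    intro i
    obtain ⟨c, hc, hcV⟩ := Set.not_subset.mp (hne i)
    obtain ⟨m, p, hp⟩ := hV i
    rw [hp, Set.mem_ofPred_eq, not_forall] at hcV
    obtain ⟨j, hj⟩ := hcV
    refine ⟨p j, fun x hx => ?_, c, hc, hj⟩
    rw [hp] at hx
    exact hx j
  choose f hfV c hcC hfc using key
  have hprod : ∀ s : Finset (Fin k), ∃ x ∈ C, MvPolynomial.eval x (∏ i ∈ s, f i) ≠ 0 := by
    intro s
    induction s using Finset.induction_on with
    | empty => exact ⟨c ⟨0, hk⟩, hcC _, by simp⟩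
    | insert a s ha ih =>
      obtain ⟨x, hx, hxs⟩ := ih
      rw [Finset.prod_insert ha]
      exact hec.exists_eval_ne_zero (hcC a) hx (hfc a) hxs
  obtain ⟨x, hx, hxf⟩ := hprod Finset.univ
  obtain ⟨i, hi⟩ := Set.mem_iUnion.mp (hC hx)
  rw [map_prod] at hxf
  exact hxf (Finset.prod_eq_zero (Finset.mem_univ i) (hfV i x hi))
end

section
/- Let S ⊆ ℝ^n be semialgebraic and let p, q ∈ S. If the set {t ∈ [0, 1] | p + t • (q − p) ∉ S} is infinite, then there exist rational numbers δ_1, δ_2 with 0 < δ_1 < δ_2 < 1 such that p + t • (q − p) ∉ S for every real t with δ_1 ≤ t ≤ δ_2 (i.e., S excludes an interval on the segment from p to q). -/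
/-!
Pull `S` back along `t ↦ p + t • (q - p)`. Each defining polynomial restricts to a univariate
polynomial, so each defining condition cuts out a subset of `ℝ` with finite frontier: the frontier
lies in the zero set of a nonzero polynomial, or is empty if the polynomial vanishes identically.
Finite unions and finite intersections keep the frontier finite, so the pullback `A` of `S` has
finite frontier. If infinitely many `t ∈ [0, 1]` lie outside `A`, one of them avoids `0`, `1` and
the frontier; it is then interior to `Aᶜ`, and a rational interval around it does the job.
-/

/-- A basic semialgebraic set: finitely many polynomial equalities and
strict polynomial inequalities. -/
def IsBasicSemialgebraic {n : ℕ} (B : Set (Fin n → ℝ)) : Prop :=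
  ∃ (k m : ℕ) (p : Fin k → MvPolynomial (Fin n) ℝ) (q : Fin m → MvPolynomial (Fin n) ℝ),
    B = {x : Fin n → ℝ |
          (∀ i : Fin k, MvPolynomial.eval x (p i) = 0) ∧
          (∀ j : Fin m, 0 < MvPolynomial.eval x (q j))}

/-- A semialgebraic set: a finite union of basic semialgebraic sets. -/
def IsSemialgebraic {n : ℕ} (S : Set (Fin n → ℝ)) : Prop :=
  ∃ (N : ℕ) (B : Fin N → Set (Fin n → ℝ)),
    (∀ i, IsBasicSemialgebraic (B i)) ∧ S = ⋃ i, B i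

theorem finite_frontier_iUnion {N : ℕ} (A : Fin N → Set ℝ) (h : ∀ i, (frontier (A i)).Finite) :
    (frontier (⋃ i, A i)).Finite := by
  refine (Set.finite_iUnion h).subset ?_
  rintro x ⟨hx, hx'⟩
  rw [closure_iUnion_of_finite] at hx
  obtain ⟨i, hi⟩ := Set.mem_iUnion.1 hx
  exact Set.mem_iUnion.2 ⟨i, hi, fun hxi => hx' (interior_mono (Set.subset_iUnion A i) hxi)⟩

theorem finite_frontier_iInter {N : ℕ} (A : Fin N → Set ℝ) (h : ∀ i, (frontier (A i)).Finite) :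
    (frontier (⋂ i, A i)).Finite := by
  rw [← frontier_compl, Set.compl_iInter]
  exact finite_frontier_iUnion _ fun i => by rw [frontier_compl]; exact h i

theorem finite_zeros {f : Polynomial ℝ} (hf : f ≠ 0) : {t : ℝ | f.eval t = 0}.Finite :=
  f.finite_setOfPred_isRoot hf

theorem finite_frontier_eq (f : Polynomial ℝ) : (frontier {t : ℝ | f.eval t = 0}).Finite := by
  by_cases hf : f = 0
  · simp [hf]
  · exact (finite_zeros hf).subset
      (isClosed_eq f.continuous continuous_const).frontier_subset

theorem finite_frontier_pos (f : Polynomial ℝ) : (frontier {t : ℝ | 0 < f.eval t}).Finite := by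
  by_cases hf : f = 0
  · simp [hf]
  · refine (finite_zeros hf).subset ?_
    exact (frontier_lt_subset_eq continuous_const f.continuous).trans fun t ht => Eq.symm ht

/-- The restriction of a polynomial to the line through `p` and `q`, with parameter `X`. -/
noncomputable def lineRestrict {n : ℕ} (p q : Fin n → ℝ) (f : MvPolynomial (Fin n) ℝ) :
    Polynomial ℝ :=
  MvPolynomial.aeval (fun i => Polynomial.C (p i) + Polynomial.X * Polynomial.C (q i - p i)) f

theorem eval_lineRestrict {n : ℕ} (p q : Fin n → ℝ) (f : MvPolynomial (Fin n) ℝ) (t : ℝ) :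
    (lineRestrict p q f).eval t = MvPolynomial.eval (p + t • (q - p)) f := by
  unfold lineRestrict
  induction f using MvPolynomial.induction_on with
  | C a => simp
  | add f g hf hg => rw [map_add, Polynomial.eval_add, hf, hg, map_add]
  | mul_X f i hf => rw [map_mul, Polynomial.eval_mul, hf, map_mul]; simp

theorem finite_frontier_basic {n : ℕ} {B : Set (Fin n → ℝ)} (hB : IsBasicSemialgebraic B)
    (p q : Fin n → ℝ) : (frontier {t : ℝ | p + t • (q - p) ∈ B}).Finite := by
  obtain ⟨k, m, f, g, rfl⟩ := hB
  have h : {t : ℝ | p + t • (q - p) ∈ {x : Fin n → ℝ |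
      (∀ i : Fin k, MvPolynomial.eval x (f i) = 0) ∧
      (∀ j : Fin m, 0 < MvPolynomial.eval x (g j))}} =
      (⋂ i, {t : ℝ | (lineRestrict p q (f i)).eval t = 0}) ∩
      (⋂ j, {t : ℝ | 0 < (lineRestrict p q (g j)).eval t}) := by
    ext t
    simp only [eval_lineRestrict, Set.mem_setOf_eq, Set.mem_inter_iff, Set.mem_iInter]
  rw [h]
  have h₁ := finite_frontier_iInter _ fun i => finite_frontier_eq (lineRestrict p q (f i))
  have h₂ := finite_frontier_iInter _ fun j => finite_frontier_pos (lineRestrict p q (g j))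
  exact ((h₁.inter_of_left _).union (h₂.inter_of_right _)).subset (frontier_inter_subset _ _)

theorem semialgebraic_excludes_interval
    (n : ℕ) (S : Set (Fin n → ℝ)) (hS : IsSemialgebraic S)
    (p q : Fin n → ℝ) (hp : p ∈ S) (hq : q ∈ S)
    (hinf : {t : ℝ | t ∈ Set.Icc (0 : ℝ) 1 ∧ p + t • (q - p) ∉ S}.Infinite) :
    ∃ δ₁ δ₂ : ℚ, 0 < δ₁ ∧ δ₁ < δ₂ ∧ δ₂ < 1 ∧
      ∀ t : ℝ, (δ₁ : ℝ) ≤ t → t ≤ (δ₂ : ℝ) → p + t • (q - p) ∉ S := by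
  have hfin : (frontier {t : ℝ | p + t • (q - p) ∈ S}).Finite := by
    obtain ⟨N, B, hB, rfl⟩ := hS
    have h : {t : ℝ | p + t • (q - p) ∈ ⋃ i, B i} = ⋃ i, {t : ℝ | p + t • (q - p) ∈ B i} := by
      ext t
      simp
    rw [h]
    exact finite_frontier_iUnion _ fun i => finite_frontier_basic (hB i) p q
  obtain ⟨t, ⟨⟨ht0, ht1⟩, htS⟩, htF⟩ := (hinf.sdiff hfin).nonempty
  have hne0 : t ≠ 0 := by
    rintro rfl
    exact htS (by simpa using hp)
  have hne1 : t ≠ 1 := by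
    rintro rfl
    exact htS (by simpa using hq)
  have hcl : t ∉ closure {t : ℝ | p + t • (q - p) ∈ S} := fun hc =>
    htF ⟨hc, fun hi => htS (interior_subset (s := {t : ℝ | p + t • (q - p) ∈ S}) hi)⟩
  obtain ⟨ε, hε, hball⟩ := Metric.isOpen_iff.1 isClosed_closure.isOpen_compl t hcl
  have h0 : 0 < t := lt_of_le_of_ne ht0 hne0.symm
  have h1 : t < 1 := lt_of_le_of_ne ht1 hne1
  obtain ⟨a, ha, hat⟩ := exists_rat_btwn (max_lt h0 (sub_lt_self t hε))
  obtain ⟨b, htb, hb⟩ := exists_rat_btwn (lt_min h1 (lt_add_of_pos_right t hε))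
  obtain ⟨ha0, haε⟩ := max_lt_iff.1 ha
  obtain ⟨hb1, hbε⟩ := lt_min_iff.1 hb
  refine ⟨a, b, by exact_mod_cast ha0, by exact_mod_cast hat.trans htb, by exact_mod_cast hb1, ?_⟩
  intro s has hsb hs
  have hsball : s ∈ Metric.ball t ε := by
    rw [Real.ball_eq_Ioo]
    exact ⟨haε.trans_le has, hsb.trans_lt hbε⟩
  exact hball hsball (subset_closure hs)
end

section
/- Let S ⊆ ℝ^n be semi-linear, let s ∈ S, and let ε > 0. Then there exists a point y ∈ S with all coordinates rational such that the Euclidean distance between y and s is strictly less than ε (i.e., every open ball around a point of S contains a rational point of S). -/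
/-!
The rational points come from `ℚ`-linear functionals. Extending `{1}` to a `ℚ`-basis of `ℝ` and
sending each basis vector to rational numbers tending to it (with `1` sent to `1`) produces
`ℚ`-linear maps `φ k : ℝ → ℚ` that fix `1` and converge pointwise to the identity
(`exists_rat_functionals_tendsto_id`).

Put `y k = (φ k (s i))ᵢ`, a rational point; then `y k → s`. For a rational affine function `f`,
`f (y k) = φ k (f s)` (`IsRatAffine.apply_functional`). Hence if `f s = 0`, then `f (y k) = 0` for
every `k`, while if `f s < 0`, then `f (y k) → f s` is eventually negative. So `y k` eventually
satisfies every constraint of a basic set containing `s`.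
-/

/-- An affine function with rational coefficients on Euclidean space. -/
def IsRatAffine {n : ℕ} (f : EuclideanSpace ℝ (Fin n) → ℝ) : Prop :=
  ∃ (a : Fin n → ℚ) (b : ℚ), ∀ x, f x = (∑ i, (a i : ℝ) * x i) + (b : ℝ)

/-- A basic semi-linear set: finitely many non-strict and strict rational
affine inequalities. -/
def IsBasicSemilinear {n : ℕ} (B : Set (EuclideanSpace ℝ (Fin n))) : Prop :=
  ∃ (k m : ℕ) (f : Fin k → (EuclideanSpace ℝ (Fin n) → ℝ))
    (g : Fin m → (EuclideanSpace ℝ (Fin n) → ℝ)),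
    (∀ i, IsRatAffine (f i)) ∧ (∀ j, IsRatAffine (g j)) ∧
    B = {x : EuclideanSpace ℝ (Fin n) | (∀ i, f i x ≤ 0) ∧ (∀ j, g j x < 0)}

/-- A semi-linear set: a finite union of basic semi-linear sets. -/
def IsSemilinear {n : ℕ} (S : Set (EuclideanSpace ℝ (Fin n))) : Prop :=
  ∃ (N : ℕ) (B : Fin N → Set (EuclideanSpace ℝ (Fin n))),
    (∀ i, IsBasicSemilinear (B i)) ∧ S = ⋃ i, B i

open Filter Topology

theorem exists_rat_functionals_tendsto_id :
    ∃ φ : ℕ → (ℝ →ₗ[ℚ] ℚ), (∀ k, φ k 1 = 1) ∧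
      ∀ x : ℝ, Tendsto (fun k => (φ k x : ℝ)) atTop (𝓝 x) := by
  have hli : LinearIndepOn ℚ id ({1} : Set ℝ) :=
    LinearIndepOn.singleton (by simp)
  let b := Module.Basis.extend hli
  have hb : ∀ j, b j = (j : ℝ) := Module.Basis.extend_apply_self hli
  have hr : ∀ x : ℝ, ∃ r : ℕ → ℚ, (x = 1 → ∀ k, r k = 1) ∧
      Tendsto (fun k => (r k : ℝ)) atTop (𝓝 x) := by
    intro x
    by_cases hx : x = 1
    · exact ⟨fun _ => 1, fun _ _ => rfl, by simp [hx]⟩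
    · obtain ⟨r, -, -, hr⟩ := Real.exists_seq_rat_strictMono_tendsto x
      exact ⟨r, fun h => absurd h hx, hr⟩
  choose r hr1 hr2 using hr
  let φ : ℕ → (ℝ →ₗ[ℚ] ℚ) := fun k => b.constr ℚ (fun j => r j k)
  refine ⟨φ, fun k => ?_, fun x => ?_⟩
  · have h1 := b.constr_basis ℚ (fun j => r j k)
      ⟨1, Module.Basis.subset_extend hli (Set.mem_singleton _)⟩
    rw [hb] at h1
    exact h1.trans (hr1 1 rfl k)
  · have hφ : ∀ k, (φ k x : ℝ) = ∑ j ∈ (b.repr x).support, (b.repr x j : ℝ) * (r j k : ℝ) := by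
      intro k
      simp [φ, Module.Basis.constr_apply, Finsupp.sum]
    have hx : x = ∑ j ∈ (b.repr x).support, (b.repr x j : ℝ) * (j : ℝ) := by
      conv_lhs => rw [← b.linearCombination_repr x]
      simp [Finsupp.linearCombination_apply, Finsupp.sum, hb, Rat.smul_def]
    simp only [hφ]
    conv => enter [3, 1]; rw [hx]
    exact tendsto_finsetSum _ fun j _ => (hr2 j).const_mul _

/-- Applying a `ℚ`-linear functional that fixes `1` to the coordinates of a point commutes with
evaluating rational affine functions. -/
theorem IsRatAffine.apply_functional {n : ℕ} {f : EuclideanSpace ℝ (Fin n) → ℝ}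
    (hf : IsRatAffine f) (φ : ℝ →ₗ[ℚ] ℚ) (hφ : φ 1 = 1) (s : EuclideanSpace ℝ (Fin n)) :
    f (WithLp.toLp 2 fun i => (φ (s i) : ℝ)) = (φ (f s) : ℝ) := by
  obtain ⟨a, c, h⟩ := hf
  have hc : φ (c : ℝ) = c := by
    have := φ.map_smul c 1
    simpa [Rat.smul_def, hφ] using this
  have ha : ∀ i, φ ((a i : ℝ) * s i) = a i * φ (s i) := fun i => by
    have := φ.map_smul (a i) (s i)
    simpa [Rat.smul_def] using this
  simp [h, map_add, map_sum, hc, ha]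

theorem semilinear_rational_points_dense
    (n : ℕ) (S : Set (EuclideanSpace ℝ (Fin n))) (hS : IsSemilinear S)
    (s : EuclideanSpace ℝ (Fin n)) (hs : s ∈ S) (ε : ℝ) (hε : 0 < ε) :
    ∃ y ∈ S, (∀ i : Fin n, ∃ r : ℚ, y i = (r : ℝ)) ∧ dist y s < ε := by
  obtain ⟨N, B, hB, rfl⟩ := hS
  obtain ⟨l, hl⟩ := Set.mem_iUnion.1 hs
  obtain ⟨p, m, f, g, hf, hg, hBl⟩ := hB l
  rw [hBl] at hl
  obtain ⟨φ, hφ1, hφ⟩ := exists_rat_functionals_tendsto_id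
  let y : ℕ → EuclideanSpace ℝ (Fin n) := fun k => WithLp.toLp 2 fun i => (φ k (s i) : ℝ)
  have hy : Tendsto y atTop (𝓝 s) :=
    ((PiLp.continuous_toLp 2 _).tendsto (WithLp.ofLp s)).comp
      (tendsto_pi_nhds.2 fun i => hφ (s i))
  have hneg : ∀ h : EuclideanSpace ℝ (Fin n) → ℝ, IsRatAffine h → h s < 0 →
      ∀ᶠ k in atTop, h (y k) < 0 := by
    intro h hh hs0
    filter_upwards [(hφ (h s)).eventually_lt_const hs0] with k hk
    rwa [hh.apply_functional (φ k) (hφ1 k) s]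
  have hfy : ∀ᶠ k in atTop, ∀ i, f i (y k) ≤ 0 := by
    refine eventually_all.2 fun i => ?_
    rcases (hl.1 i).lt_or_eq with h | h
    · exact (hneg _ (hf i) h).mono fun _ => le_of_lt
    · refine Eventually.of_forall fun k => le_of_eq ?_
      rw [(hf i).apply_functional (φ k) (hφ1 k) s, h]
      simp
  have hgy : ∀ᶠ k in atTop, ∀ j, g j (y k) < 0 :=
    eventually_all.2 fun j => hneg _ (hg j) (hl.2 j)
  obtain ⟨k, hk1, hk2, hk3⟩ :=
    (hfy.and (hgy.and (hy.eventually (Metric.ball_mem_nhds s hε)))).exists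
  exact ⟨y k, Set.mem_iUnion.2 ⟨l, hBl ▸ ⟨hk1, hk2⟩⟩, fun i => ⟨φ k (s i), rfl⟩, hk3⟩
end

section
/- If S ⊆ ℝ^n is essentially convex, then the topological closure of S is a convex set. -/
theorem closure_convex_of_essentiallyConvex
    (n : ℕ) (S : Set (Fin n → ℝ)) (h : EssentiallyConvex S) :
    Convex ℝ (closure S) := by
  -- It suffices to treat endpoints in `S`: `(x, y) ↦ a • x + b • y` is continuous.
  rw [convex_iff_forall_pos]
  intro x hx y hy a b ha hb hab
  rw [← closure_closure]
  refine map_mem_closure₂ (f := fun x y : Fin n → ℝ => a • x + b • y) (by fun_prop) hx hy ?_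
  intro p hp q hq
  rcases eq_or_ne p q with rfl | hpq
  · simpa only [← add_smul, hab, one_smul] using subset_closure hp
  -- The parameters of the missing points form a finite set, whose complement is dense.
  have hfin : (AffineMap.lineMap p q ⁻¹' (segment ℝ p q \ S) : Set ℝ).Finite :=
    (h p hp q hq).preimage (AffineMap.lineMap_injective ℝ hpq).injOn
  have hb_mem : b ∈ Set.Ioo (0 : ℝ) 1 := ⟨hb, by linarith⟩
  have hcl := (hfin.countable.dense_compl ℝ).open_subset_closure_inter isOpen_Ioo hb_mem
  have hpoint : a • p + b • q = AffineMap.lineMap p q b := by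
    rw [AffineMap.lineMap_apply_module, ← hab, add_sub_cancel_right]
  change a • p + b • q ∈ closure S
  rw [hpoint]
  refine map_mem_closure AffineMap.lineMap_continuous hcl ?_
  rintro t ⟨ht, htS⟩
  by_contra hnot
  refine htS ⟨?_, hnot⟩
  rw [segment_eq_image_lineMap]
  exact Set.mem_image_of_mem _ (Set.Ioo_subset_Icc_self ht)
end

section
/- Let N ∈ ℕ and for each j ≤ N let V_j ⊆ ℝ^n be a variety (the common zero set of finitely many polynomials in MvPolynomial (Fin n) ℝ) and let K_j ⊆ ℝ^n be a convex set. Then the set S = ⋂_{j ≤ N} ((ℝ^n \ V_j) ∪ K_j) is essentially convex. (In logical terms: every set defined by a conjunction of formulas of the form p_1 ≠ 0 ∨ … ∨ p_k ≠ 0 ∨ φ, where the p_i are polynomials and φ defines a convex set, is essentially convex.) -/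
lemma exists_polynomial_eval_eq_eval_line {n : ℕ} (f : MvPolynomial (Fin n) ℝ)
    (a b : Fin n → ℝ) :
    ∃ g : Polynomial ℝ, ∀ t : ℝ, g.eval t = MvPolynomial.eval (a + t • (b - a)) f := by
  refine ⟨MvPolynomial.aeval
    (fun i => Polynomial.C (a i) + Polynomial.X * Polynomial.C (b i - a i)) f, fun t => ?_⟩
  induction f using MvPolynomial.induction_on with
  | C c => simp
  | add p q hp hq => simp only [map_add, Polynomial.eval_add, hp, hq]
  | mul_X p i hp =>
    simp only [map_mul, Polynomial.eval_mul, hp, MvPolynomial.aeval_X, MvPolynomial.eval_X]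
    simp

lemma IsVariety.mem_or_finite_segment_inter {n : ℕ} {V : Set (Fin n → ℝ)} (hV : IsVariety V)
    (a b : Fin n → ℝ) : (a ∈ V ∧ b ∈ V) ∨ (segment ℝ a b ∩ V).Finite := by
  obtain ⟨m, p, rfl⟩ := hV
  choose g hg using fun i => exists_polynomial_eval_eq_eval_line (p i) a b
  by_cases h : ∀ i, g i = 0
  · -- The parameters `t = 0` and `t = 1` give the endpoints.
    refine Or.inl ⟨fun i => ?_, fun i => ?_⟩
    · simpa [h i] using (hg i 0).symm
    · simpa [h i] using (hg i 1).symm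
  · push Not at h
    obtain ⟨i, hi⟩ := h
    refine Or.inr (((g i).finite_setOfPred_isRoot hi).image (fun t => a + t • (b - a)) |>.subset ?_)
    rintro x ⟨hx, hxV⟩
    rw [segment_eq_image'] at hx
    obtain ⟨t, -, rfl⟩ := hx
    exact ⟨t, (hg i t).trans (hxV i), rfl⟩

theorem inter_compl_variety_union_convex_essentiallyConvex
    (n N : ℕ) (V K : Fin (N + 1) → Set (Fin n → ℝ))
    (hV : ∀ j, IsVariety (V j)) (hK : ∀ j, Convex ℝ (K j)) :
    EssentiallyConvex (⋂ j : Fin (N + 1), ((V j)ᶜ ∪ K j)) := by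
  intro a ha b hb
  rw [Set.sdiff_iInter]
  refine Set.finite_iUnion fun j => ?_
  rcases (hV j).mem_or_finite_segment_inter a b with ⟨haV, hbV⟩ | hfin
  · have haK : a ∈ K j := (Set.mem_iInter.1 ha j).resolve_left fun h => h haV
    have hbK : b ∈ K j := (Set.mem_iInter.1 hb j).resolve_left fun h => h hbV
    rw [Set.sdiff_eq_empty.2 (((hK j).segment_subset haK hbK).trans Set.subset_union_right)]
    exact Set.finite_empty
  · exact hfin.subset fun x hx => ⟨hx.1, by_contra fun h => hx.2 (Or.inl h)⟩
end

section
/- Consider a Horn-DLR system over ℝ^n: a finite set of clauses, each clause being either {x | f_1(x) ≠ 0 ∨ … ∨ f_k(x) ≠ 0} (k ≥ 1) or {x | f_1(x) ≠ 0 ∨ … ∨ f_k(x) ≠ 0 ∨ g(x) ≤ 0} (k ≥ 0), with all f_i, g affine with rational coefficients. Let S be the intersection of all clauses, and let S' be the intersection of only those clauses of the form {x | g(x) ≤ 0} (containing no disequality literal). Assume that for every affine function h occurring as a disequality literal f_i in some clause, the set S ∩ {x | h(x) ≠ 0} is nonempty. Then the topological closure of S equals S'. -/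
/-!
`S'` is closed and convex, and `S ⊆ S'`, which gives `closure S ⊆ S'`. Conversely, pick one
disequality `f` in each clause that has any. By hypothesis some `w ∈ S ⊆ S'` satisfies `f w ≠ 0`,
so if `x ∈ S'` and `f x = 0`, the points `x + t (w - x)` with `t ∈ (0, 1]` lie in `S'`, satisfy
`f ≠ 0`, and tend to `x`. Hence each chosen `{f ≠ 0}` is open and dense in the space `S'`, and so
is their finite intersection (Baire's theorem in the complete space `S'`). Since that intersection
is contained in `S`, the set `S` is dense in `S'`.
-/

/-- An affine map `x ↦ a·x + b` with rational coefficients, given by its data. -/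
def affEval {n : ℕ} (p : (Fin n → ℚ) × ℚ) (x : Fin n → ℝ) : ℝ :=
  (∑ i, ((p.1 i : ℝ)) * x i) + (p.2 : ℝ)

/-- A syntactic Horn-DLR clause: a disjunction of `k` disequalities
`f i (x) ≠ 0` together with, optionally, one inequality `g(x) ≤ 0`;
if there is no inequality then `k ≥ 1`. -/
structure HornClause (n : ℕ) where
  k : ℕ
  f : Fin k → (Fin n → ℚ) × ℚ
  g : Option ((Fin n → ℚ) × ℚ)
  pos : g = none → 1 ≤ k

/-- The set of points satisfying a Horn-DLR clause. -/
def HornClause.toSet {n : ℕ} (c : HornClause n) : Set (Fin n → ℝ) :=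
  {x : Fin n → ℝ | (∃ i : Fin c.k, affEval (c.f i) x ≠ 0) ∨
    (∃ q ∈ c.g, affEval q x ≤ 0)}

theorem affEval_continuous {n : ℕ} (p : (Fin n → ℚ) × ℚ) : Continuous (affEval p) := by
  unfold affEval
  fun_prop

theorem affEval_segment {n : ℕ} (p : (Fin n → ℚ) × ℚ) (x w : Fin n → ℝ) (t : ℝ) :
    affEval p (x + t • (w - x)) = (1 - t) * affEval p x + t * affEval p w := by
  have h : ∑ i, (p.1 i : ℝ) * (x + t • (w - x)) i
      = (1 - t) * ∑ i, (p.1 i : ℝ) * x i + t * ∑ i, (p.1 i : ℝ) * w i := by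
    rw [Finset.mul_sum, Finset.mul_sum, ← Finset.sum_add_distrib]
    refine Finset.sum_congr rfl fun i _ => ?_
    simp only [Pi.add_apply, Pi.smul_apply, Pi.sub_apply, smul_eq_mul]
    ring
  unfold affEval
  rw [h]
  ring

theorem HornClause.toSet_of_k_eq_zero {n : ℕ} (c : HornClause n) (hc : c.k = 0) :
    ∃ q, c.toSet = {x | affEval q x ≤ 0} := by
  have : IsEmpty (Fin c.k) := by rw [hc]; infer_instance
  rcases hg : c.g with _ | q
  · have := c.pos hg
    omega
  · refine ⟨q, ?_⟩
    ext x
    simp [HornClause.toSet, hg]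

/-- In a set closed under moving along segments, a disequality that holds somewhere holds on a
dense subset. -/
theorem dense_ne_zero {n : ℕ} {K : Set (Fin n → ℝ)}
    (hK : ∀ x ∈ K, ∀ w ∈ K, ∀ t : ℝ, 0 ≤ t → t ≤ 1 → x + t • (w - x) ∈ K)
    (p : (Fin n → ℚ) × ℚ) {w : Fin n → ℝ} (hw : w ∈ K) (hpw : affEval p w ≠ 0) :
    Dense {x : K | affEval p x ≠ 0} := by
  rintro ⟨x, hx⟩
  by_cases h0 : affEval p x = 0
  · rw [closure_subtype]
    have hlim : Filter.Tendsto (fun t : ℝ => x + t • (w - x)) (nhdsWithin 0 (Set.Ioi 0))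
        (nhds x) := by
      have hc : Continuous (fun t : ℝ => x + t • (w - x)) := by fun_prop
      have := hc.tendsto 0
      simp only [zero_smul, add_zero] at this
      exact this.mono_left nhdsWithin_le_nhds
    refine mem_closure_of_tendsto hlim ?_
    filter_upwards [Ioc_mem_nhdsGT (zero_lt_one' ℝ)] with t ht
    refine ⟨⟨_, hK x hx w hw t ht.1.le ht.2⟩, ?_, rfl⟩
    simp only [Set.mem_ofPred_eq, affEval_segment, h0, mul_zero, zero_add]
    exact mul_ne_zero ht.1.ne' hpw
  · exact subset_closure h0

theorem hornDLR_closure_eq_inequality_part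
    (n N : ℕ) (C : Fin N → HornClause n)
    (S S' : Set (Fin n → ℝ))
    (hS : S = ⋂ j, (C j).toSet)
    (hS' : S' = ⋂ j, ⋂ (_ : (C j).k = 0), (C j).toSet)
    (hsep : ∀ (j : Fin N) (i : Fin (C j).k),
      (S ∩ {x : Fin n → ℝ | affEval ((C j).f i) x ≠ 0}).Nonempty) :
    closure S = S' := by
  have hmem' : ∀ x, x ∈ S' ↔ ∀ j, (C j).k = 0 → x ∈ (C j).toSet := by
    intro x
    simp [hS']
  have hsub : S ⊆ S' := by
    intro x hx
    rw [hS, Set.mem_iInter] at hx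
    exact (hmem' x).2 fun j _ => hx j
  have hclosed : IsClosed S' := by
    rw [hS']
    refine isClosed_iInter fun j => isClosed_iInter fun hj => ?_
    obtain ⟨q, hq⟩ := (C j).toSet_of_k_eq_zero hj
    rw [hq]
    exact isClosed_le (affEval_continuous q) continuous_const
  have hconv : ∀ x ∈ S', ∀ w ∈ S', ∀ t : ℝ, 0 ≤ t → t ≤ 1 → x + t • (w - x) ∈ S' := by
    intro x hx w hw t ht0 ht1
    rw [hmem'] at hx hw ⊢
    intro j hj
    have hxj := hx j hj
    have hwj := hw j hj
    obtain ⟨q, hq⟩ := (C j).toSet_of_k_eq_zero hj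
    rw [hq, Set.mem_ofPred_eq] at hxj hwj ⊢
    rw [affEval_segment]
    have h1 := mul_nonpos_of_nonneg_of_nonpos (sub_nonneg.2 ht1) hxj
    have h2 := mul_nonpos_of_nonneg_of_nonpos ht0 hwj
    linarith
  refine Set.Subset.antisymm (closure_minimal hsub hclosed) fun x hx => ?_
  have : CompleteSpace S' := hclosed.completeSpace_coe
  -- one disequality, the first, is chosen from each clause that contains any
  have hdense : Dense (⋂ j : {j // 0 < (C j).k},
      {y : S' | affEval ((C j).f ⟨0, j.2⟩) y ≠ 0}) := by
    refine dense_iInter_of_isOpen (fun j => ?_) fun j => ?_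
    · exact isOpen_ne_fun ((affEval_continuous _).comp continuous_subtype_val) continuous_const
    · obtain ⟨w, hwS, hw⟩ := hsep j ⟨0, j.2⟩
      exact dense_ne_zero hconv _ (hsub hwS) hw
  refine closure_mono ?_ (closure_subtype.1 (hdense ⟨x, hx⟩))
  rintro _ ⟨y, hy, rfl⟩
  rw [hS, Set.mem_iInter]
  intro j
  rcases Nat.eq_zero_or_pos (C j).k with hj | hj
  · exact (hmem' y).1 y.2 j hj
  · exact Or.inl ⟨⟨0, hj⟩, Set.mem_iInter.1 hy ⟨j, hj⟩⟩
end

section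
/- Let S = {(x, y) ∈ ℝ² | |x + y| ≤ 1 ∧ (y = √2 · x → |x + y| = 1)}, and let a = (√2 − 1, 2 − √2) and b = (1 − √2, √2 − 2). Then: (i) a ∈ S, b ∈ S, and infinitely many points of the closed segment [a, b] do not belong to S (so S is not essentially convex); and (ii) these are the only witnesses: for all p, q ∈ S, if infinitely many points of the closed segment [p, q] do not belong to S, then {p, q} = {a, b}. -/
/-!
The set is the strip `|x + y| ≤ 1` with the line `L : y = √2 x` removed, except for the two points
`ptA`, `ptB = -ptA` where `L` meets the boundary of the strip. The strip is convex, so on a segment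
between points of the set every missing point lies on `L`. Two distinct missing points
force the whole segment into `L`, hence both endpoints into `{ptA, ptB}`; they differ, since a
degenerate segment has only one point. Conversely the points `t • ptA` with `0 < t < 1` are
infinitely many missing points of `[ptA, ptB]`.
-/

/-- The set `{(x, y) | |x + y| ≤ 1 ∧ (y = √2 · x → |x + y| = 1)}`. -/
def coneExample : Set (ℝ × ℝ) :=
  {p : ℝ × ℝ | |p.1 + p.2| ≤ 1 ∧ (p.2 = Real.sqrt 2 * p.1 → |p.1 + p.2| = 1)}

/-- The point `(√2 − 1, 2 − √2)`. -/
noncomputable def ptA : ℝ × ℝ := (Real.sqrt 2 - 1, 2 - Real.sqrt 2)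

/-- The point `(1 − √2, √2 − 2)`. -/
noncomputable def ptB : ℝ × ℝ := (1 - Real.sqrt 2, Real.sqrt 2 - 2)

/-- The points of `coneExample` on the line `y = √2 x` are `ptA` and `ptB`. -/
lemma eq_ptA_or_ptB_of_mem_of_line {p : ℝ × ℝ} (hp : p ∈ coneExample)
    (hL : p.2 = Real.sqrt 2 * p.1) : p = ptA ∨ p = ptB := by
  have hs : Real.sqrt 2 * Real.sqrt 2 = 2 := Real.mul_self_sqrt (by norm_num)
  obtain ⟨x, y⟩ := p
  have h := hp.2 hL
  simp only at hL h
  subst hL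
  -- `(1 + √2) x = ±1` is solved by multiplying with `√2 - 1`, the inverse of `1 + √2`.
  rcases (abs_eq zero_le_one).1 h with h | h
  · left
    have hx : x = Real.sqrt 2 - 1 := by
      linear_combination (Real.sqrt 2 - 1) * h - x * hs
    subst hx
    ext
    · rfl
    · simp only [ptA]; linear_combination hs
  · right
    have hx : x = 1 - Real.sqrt 2 := by
      linear_combination (Real.sqrt 2 - 1) * h - x * hs
    subst hx
    ext
    · rfl
    · simp only [ptB]; linear_combination -hs

/-- By convexity of the strip, missing points of a segment lie on the line `y = √2 x`. -/
lemma line_of_mem_segment_diff {p q z : ℝ × ℝ} (hp : p ∈ coneExample) (hq : q ∈ coneExample)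
    (hz : z ∈ segment ℝ p q \ coneExample) : z.2 = Real.sqrt 2 * z.1 := by
  obtain ⟨⟨s, t, hs, ht, hst, rfl⟩, hzS⟩ := hz
  by_contra hL
  refine hzS ⟨?_, fun h => absurd h hL⟩
  have h1 := abs_le.1 hp.1
  have h2 := abs_le.1 hq.1
  simp only [Prod.fst_add, Prod.snd_add, Prod.smul_fst, Prod.smul_snd, smul_eq_mul]
  rw [abs_le]
  constructor
  · nlinarith [mul_le_mul_of_nonneg_left h1.1 hs, mul_le_mul_of_nonneg_left h2.1 ht]
  · nlinarith [mul_le_mul_of_nonneg_left h1.2 hs, mul_le_mul_of_nonneg_left h2.2 ht]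

lemma ptA_mem : ptA ∈ coneExample := by
  have h : |ptA.1 + ptA.2| = 1 := by simp [ptA]; norm_num
  exact ⟨h.le, fun _ => h⟩

lemma ptB_mem : ptB ∈ coneExample := by
  have h : |ptB.1 + ptB.2| = 1 := by
    have : ptB.1 + ptB.2 = -1 := by simp only [ptB]; ring
    rw [this]; norm_num
  exact ⟨h.le, fun _ => h⟩

lemma infinite_segment_ptA_ptB : (segment ℝ ptA ptB \ coneExample).Infinite := by
  have hs : Real.sqrt 2 * Real.sqrt 2 = 2 := Real.mul_self_sqrt (by norm_num)
  have hA : ptA.1 + ptA.2 = 1 := by simp only [ptA]; ring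
  have hinj : Function.Injective fun t : ℝ => t • ptA := by
    intro s t h
    have h1 := congrArg Prod.fst h
    have h2 := congrArg Prod.snd h
    simp only [Prod.smul_fst, Prod.smul_snd, smul_eq_mul] at h1 h2
    linear_combination h1 + h2 - (s - t) * hA
  refine ((Set.Ioo_infinite (zero_lt_one (α := ℝ))).image hinj.injOn).mono ?_
  rintro _ ⟨t, ⟨h0, h1⟩, rfl⟩
  refine ⟨⟨(1 + t) / 2, (1 - t) / 2, by linarith, by linarith, by ring, ?_⟩, fun hmem => ?_⟩
  · ext <;> simp only [ptA, ptB, Prod.fst_add, Prod.snd_add, Prod.smul_fst, Prod.smul_snd,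
      smul_eq_mul] <;> ring
  · have h := hmem.2 (by
      simp only [ptA, Prod.smul_fst, Prod.smul_snd, smul_eq_mul]
      linear_combination -t * hs)
    have e : (t • ptA).1 + (t • ptA).2 = t := by
      simp only [Prod.smul_fst, Prod.smul_snd, smul_eq_mul]
      linear_combination t * hA
    simp only [e, abs_of_pos h0] at h
    linarith

/-- A segment with two distinct points on the line `y = √2 x` has both endpoints on it. -/
lemma endpoints_on_line {p q z w : ℝ × ℝ} (hz : z ∈ segment ℝ p q) (hw : w ∈ segment ℝ p q)
    (hne : z ≠ w) (hzL : z.2 = Real.sqrt 2 * z.1) (hwL : w.2 = Real.sqrt 2 * w.1) :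
    p.2 = Real.sqrt 2 * p.1 ∧ q.2 = Real.sqrt 2 * q.1 := by
  obtain ⟨s, t, -, -, hst, rfl⟩ := hz
  obtain ⟨s', t', -, -, hst', rfl⟩ := hw
  obtain rfl : s = 1 - t := by linarith
  obtain rfl : s' = 1 - t' := by linarith
  have htt : t - t' ≠ 0 := fun h => hne (by rw [sub_eq_zero.1 h])
  simp only [Prod.fst_add, Prod.snd_add, Prod.smul_fst, Prod.smul_snd, smul_eq_mul] at hzL hwL
  -- The defect `y - √2 x` is affine along the segment and vanishes at two parameters.
  have key : (q.2 - Real.sqrt 2 * q.1) - (p.2 - Real.sqrt 2 * p.1) = 0 :=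
    (mul_eq_zero.1 (show (t - t') * ((q.2 - Real.sqrt 2 * q.1) - (p.2 - Real.sqrt 2 * p.1)) = 0 by
      linear_combination hzL - hwL)).resolve_left htt
  constructor
  · linear_combination hzL - t * key
  · linear_combination hzL + (1 - t) * key

theorem coneExample_unique_irrational_witnesses :
    ptA ∈ coneExample ∧ ptB ∈ coneExample ∧
    (segment ℝ ptA ptB \ coneExample).Infinite ∧
    (∀ p ∈ coneExample, ∀ q ∈ coneExample,
      (segment ℝ p q \ coneExample).Infinite →
      ({p, q} : Set (ℝ × ℝ)) = {ptA, ptB}) := by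
  refine ⟨ptA_mem, ptB_mem, infinite_segment_ptA_ptB, fun p hp q hq hinf => ?_⟩
  obtain ⟨z, hz, w, hw, hne⟩ := hinf.nontrivial
  obtain ⟨hpL, hqL⟩ := endpoints_on_line hz.1 hw.1 hne
    (line_of_mem_segment_diff hp hq hz) (line_of_mem_segment_diff hp hq hw)
  have hpq : p ≠ q := by
    rintro rfl
    have h1 := hz.1
    have h2 := hw.1
    rw [segment_same] at h1 h2
    exact hne (h1.trans h2.symm)
  rcases eq_ptA_or_ptB_of_mem_of_line hp hpL with rfl | rfl <;>
    rcases eq_ptA_or_ptB_of_mem_of_line hq hqL with rfl | rfl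
  · exact absurd rfl hpq
  · rfl
  · exact Set.pair_comm _ _
  · exact absurd rfl hpq
end

section
/- There exists a constant c ∈ ℕ such that for every l ≥ 1 and all rational numbers n_0, n_1, …, n_l, there exist m ∈ ℕ, a finite list A of triples of indices in Fin (l + m), and a finite list O of indices in Fin (l + m), with m + (length of A) + (length of O) ≤ c · Σ_{i=0}^{l} (1 + Nat.log 2 ((n_i).num.natAbs + 1) + Nat.log 2 (n_i).den), such that for every x : Fin l → ℝ the following are equivalent: (1) Σ_{i=1}^{l} n_i · x_i = n_0; (2) there exists y : Fin m → ℝ such that, writing z : Fin (l + m) → ℝ for the concatenation of x and y, one has z_a + z_b = z_c for every triple (a, b, c) in A and z_d = 1 for every index d in O. (This expresses that the relation Σ n_i x_i = n_0 is primitive positive definable over (ℝ; {(x,y,z) | x + y = z}, {1}) by a formula of size polynomial in the binary representation of the coefficients.) -/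
/-!
Each coefficient is handled by binary doubling. The relation `v = n * u` for a natural number `n`
is obtained from `w = (n / 2) * u` by the constraints `w + w = v` (even `n`) or
`w + w = t`, `t + u = v` (odd `n`), so it costs `O(1 + log n)` variables and constraints
(`PPDef.natMul`). For a rational `q = ± p / d`, the relation `v = q * u` says that `p * u` and
`± d * v` agree, where a sign is expressed by `w + w' = o`, `o + o = o` (`PPDef.ratMul`). A linear
combination is then summed one term at a time (`PPDef.sum`), and the constant `n₀` is `n₀ * o`
for a variable `o` constrained to be `1`.

To avoid index arithmetic, free and auxiliary variables are indexed by arbitrary types, so that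
definability with a given size bound is closed under conjunction and existential quantification;
only the final theorem transfers to `Fin (l + m)`.
-/

/-- The valuation `z` satisfies the constraints `z a + z b = z c` for `(a, b, c) ∈ A` and
`z d = 1` for `d ∈ O`. -/
def Sat {α : Type} (z : α → ℝ) (A : List (α × α × α)) (O : List α) : Prop :=
  (∀ t ∈ A, z t.1 + z t.2.1 = z t.2.2) ∧ ∀ d ∈ O, z d = 1

/-- Renaming of variables in a triple. -/
def mapTriple {α β : Type} (e : α → β) (t : α × α × α) : β × β × β :=
  (e t.1, e t.2.1, e t.2.2)

lemma sat_map {α β : Type} (e : α → β) (z : β → ℝ) (A : List (α × α × α)) (O : List α) :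
    Sat z (A.map (mapTriple e)) (O.map e) ↔ Sat (z ∘ e) A O := by
  simp only [Sat, List.forall_mem_map, mapTriple, Function.comp]

lemma sat_append {α : Type} (z : α → ℝ) (A B : List (α × α × α)) (O P : List α) :
    Sat z (A ++ B) (O ++ P) ↔ Sat z A O ∧ Sat z B P := by
  simp only [Sat, List.forall_mem_append]
  tauto

/-- `R` is primitive positive definable over `(ℝ; x + y = z, {1})` with at most `s` auxiliary
variables and constraints in total. Free variables are indexed by `ι`, existentially quantified
ones by some finite type `κ`. -/
def PPDef (ι : Type) (R : (ι → ℝ) → Prop) (s : ℕ) : Prop :=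
  ∃ (κ : Type) (_ : Fintype κ) (A : List ((ι ⊕ κ) × (ι ⊕ κ) × (ι ⊕ κ))) (O : List (ι ⊕ κ)),
    Fintype.card κ + A.length + O.length ≤ s ∧
      ∀ x : ι → ℝ, R x ↔ ∃ y : κ → ℝ, Sat (Sum.elim x y) A O

namespace PPDef

lemma mono {ι : Type} {R S : (ι → ℝ) → Prop} {s t : ℕ} (h : PPDef ι R s) (hst : s ≤ t)
    (hRS : ∀ x, S x ↔ R x) : PPDef ι S t := by
  obtain ⟨κ, i, A, O, hs, hx⟩ := h
  exact ⟨κ, i, A, O, hs.trans hst, fun x => (hRS x).trans (hx x)⟩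

lemma add {ι : Type} (a b c : ι) : PPDef ι (fun x => x a + x b = x c) 1 :=
  ⟨Empty, inferInstance, [(.inl a, .inl b, .inl c)], [], by simp, fun x => by simp [Sat]⟩

lemma one {ι : Type} (a : ι) : PPDef ι (fun x => x a = 1) 1 :=
  ⟨Empty, inferInstance, [], [.inl a], by simp, fun x => by simp [Sat]⟩

lemma and {ι : Type} {R S : (ι → ℝ) → Prop} {s t : ℕ} (hR : PPDef ι R s) (hS : PPDef ι S t) :
    PPDef ι (fun x => R x ∧ S x) (s + t) := by
  obtain ⟨κ, _, A, O, hs, hx⟩ := hR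
  obtain ⟨μ, _, B, P, ht, hy⟩ := hS
  let e : ι ⊕ κ → ι ⊕ (κ ⊕ μ) := Sum.map id Sum.inl
  let f : ι ⊕ μ → ι ⊕ (κ ⊕ μ) := Sum.map id Sum.inr
  have he (x : ι → ℝ) (y : κ ⊕ μ → ℝ) : Sum.elim x y ∘ e = Sum.elim x (y ∘ Sum.inl) := by
    ext (i | i) <;> rfl
  have hf (x : ι → ℝ) (y : κ ⊕ μ → ℝ) : Sum.elim x y ∘ f = Sum.elim x (y ∘ Sum.inr) := by
    ext (i | i) <;> rfl
  refine ⟨κ ⊕ μ, inferInstance, A.map (mapTriple e) ++ B.map (mapTriple f),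
    O.map e ++ P.map f, ?_, fun x => ?_⟩
  · simp only [Fintype.card_sum, List.length_append, List.length_map]
    omega
  · simp only [sat_append, sat_map, he, hf, hx, hy]
    constructor
    · rintro ⟨⟨y, hy⟩, z, hz⟩
      exact ⟨Sum.elim y z, hy, hz⟩
    · rintro ⟨y, h1, h2⟩
      exact ⟨⟨_, h1⟩, _, h2⟩

lemma ex {ι : Type} {R : (Option ι → ℝ) → Prop} {s : ℕ} (hR : PPDef (Option ι) R s) :
    PPDef ι (fun x => ∃ a : ℝ, R (fun o => o.elim a x)) (s + 1) := by
  obtain ⟨κ, _, A, O, hs, hx⟩ := hR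
  let e : Option ι ⊕ κ → ι ⊕ Option κ :=
    Sum.elim (fun o => o.elim (Sum.inr none) Sum.inl) (fun k => Sum.inr (some k))
  have he (x : ι → ℝ) (y : Option κ → ℝ) :
      Sum.elim x y ∘ e = Sum.elim (fun o => o.elim (y none) x) (fun k => y (some k)) := by
    ext ((_ | i) | i) <;> rfl
  refine ⟨Option κ, inferInstance, A.map (mapTriple e), O.map e, ?_, fun x => ?_⟩
  · simp only [Fintype.card_option, List.length_map]
    omega
  · simp only [sat_map, he, hx]
    constructor
    · rintro ⟨a, y, h⟩
      exact ⟨fun o => o.elim a y, h⟩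
    · rintro ⟨y, h⟩
      exact ⟨_, _, h⟩

lemma zero {ι : Type} (a : ι) : PPDef ι (fun x => x a = 0) 1 :=
  (add a a a).mono le_rfl fun x => by simp

lemma eq {ι : Type} (a b : ι) : PPDef ι (fun x => x a = x b) 3 :=
  ((zero none).and (add (some a) none (some b))).ex.mono le_rfl fun x => by simp

/-- Multiplication by a natural number, by repeated doubling. -/
lemma natMul (n : ℕ) : ∀ {ι : Type} (a b : ι),
    PPDef ι (fun x => x b = n * x a) (4 * Nat.log 2 n + 3) := by
  induction n using Nat.strong_induction_on with
  | _ n ih =>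
    intro ι a b
    rcases Nat.lt_or_ge n 2 with hn | hn
    · interval_cases n
      · exact (zero b).mono (by omega) fun x => by simp
      · exact (eq b a).mono (by omega) fun x => by simp
    have hlog : Nat.log 2 n = Nat.log 2 (n / 2) + 1 := Nat.log_of_one_lt_of_le one_lt_two hn
    rcases Nat.even_or_odd' n with ⟨k, hk | hk⟩
    · have hk2 : n / 2 = k := by omega
      rw [hk2] at hlog
      have h := ((ih k (by omega) (some a) none).and (add none none (some b))).ex
      refine h.mono (by omega) fun x => ?_
      simp only [Option.elim, exists_eq_left, hk]
      push_cast
      constructor <;> intro h <;> linarith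
    · have hk2 : n / 2 = k := by omega
      rw [hk2] at hlog
      have h := (((ih k (by omega) (some (some a)) (some none)).and
        ((add (some none) (some none) none).and
          (add none (some (some a)) (some (some b))))).ex).ex
      refine h.mono (by omega) fun x => ?_
      simp only [Option.elim, exists_eq_left, exists_and_left, exists_eq_left', hk]
      push_cast
      constructor <;> intro h <;> linarith

/-- The size `1 + log (|num| + 1) + log den` of the binary representation of a rational. -/
def cost (q : ℚ) : ℕ := 1 + Nat.log 2 (q.num.natAbs + 1) + Nat.log 2 q.den

lemma ratMul (q : ℚ) {ι : Type} (a b : ι) : PPDef ι (fun x => x b = q * x a) (11 * cost q) := by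
  have hlog : Nat.log 2 q.num.natAbs ≤ Nat.log 2 (q.num.natAbs + 1) :=
    Nat.log_mono_right (Nat.le_succ _)
  have hden : (q.den : ℝ) ≠ 0 := by exact_mod_cast q.den_nz
  have hq : (q : ℝ) = q.num / q.den := Rat.cast_def q
  rcases le_total 0 q.num with hs | hs
  · have hnum : (q.num : ℝ) = q.num.natAbs := by
      rw [← Int.cast_natCast, Int.natAbs_of_nonneg hs]
    have h := ((natMul q.num.natAbs (some a) none).and (natMul q.den (some b) none)).ex
    refine h.mono (by unfold cost; omega) fun x => ?_
    simp only [Option.elim, exists_eq_left, hq, hnum]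
    field_simp
    constructor <;> intro h <;> linarith
  · have hnum : (q.num : ℝ) = -q.num.natAbs := by
      rw [← Int.cast_natCast, Int.ofNat_natAbs_of_nonpos hs]
      simp
    -- The quantified variables are `p * u`, then `d * v`, then `0`, from outermost to innermost.
    have h := (((natMul q.num.natAbs (some (some (some a))) (some (some none))).and
      ((natMul q.den (some (some (some b))) (some none)).and
        ((zero none).and (add (some (some none)) (some none) none)))).ex).ex.ex
    refine h.mono (by unfold cost; omega) fun x => ?_
    simp only [Option.elim, exists_eq_left, exists_and_left, hq, hnum]
    field_simp
    constructor <;> intro h <;> linarith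

lemma sum {τ : Type} [DecidableEq τ] (q : τ → ℚ) (s : Finset τ) : ∀ {ι : Type} (f : τ → ι) (b : ι),
    PPDef ι (fun x => ∑ k ∈ s, (q k : ℝ) * x (f k) = x b) (14 * ∑ k ∈ s, cost (q k) + 1) := by
  induction s using Finset.induction_on with
  | empty => exact fun f b => (zero b).mono (by simp) fun x => by simp [eq_comm]
  | insert k s hk ih =>
    intro ι f b
    have h := (((ratMul (q k) (some (some (f k))) (some none)).and
      ((ih (fun k => some (some (f k))) none).and
        (add (some none) none (some (some b))))).ex).ex
    refine h.mono ?_ fun x => ?_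
    · have : 1 ≤ cost (q k) := by unfold cost; omega
      rw [Finset.sum_insert hk]
      omega
    · simp only [Option.elim, exists_eq_left, exists_and_left, exists_eq_left',
        Finset.sum_insert hk]

lemma linear (l : ℕ) (nq : Fin (l + 1) → ℚ) :
    PPDef (Fin l) (fun x => ∑ i : Fin l, (nq i.succ : ℝ) * x i = (nq 0 : ℝ))
      (15 * ∑ i, cost (nq i)) := by
  have h := (((one (some none)).and ((ratMul (nq 0) (some none) none).and
    (sum (fun i : Fin l => nq i.succ) Finset.univ (fun i => some (some i)) none))).ex).ex
  refine h.mono ?_ fun x => ?_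
  · have : 1 ≤ cost (nq 0) := by unfold cost; omega
    rw [Fin.sum_univ_succ]
    omega
  · simp only [Option.elim, exists_eq_left, exists_and_left, mul_one]

end PPDef

theorem linear_equation_pp_definable_polysize :
    ∃ c : ℕ, ∀ l : ℕ, 1 ≤ l → ∀ nq : Fin (l + 1) → ℚ,
      ∃ (m : ℕ) (A : List (Fin (l + m) × Fin (l + m) × Fin (l + m)))
        (O : List (Fin (l + m))),
        m + A.length + O.length ≤
          c * ∑ i : Fin (l + 1),
            (1 + Nat.log 2 ((nq i).num.natAbs + 1) + Nat.log 2 (nq i).den) ∧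
        ∀ x : Fin l → ℝ,
          ((∑ i : Fin l, ((nq i.succ : ℚ) : ℝ) * x i) = ((nq 0 : ℚ) : ℝ)) ↔
          ∃ y : Fin m → ℝ,
            (∀ t ∈ A, Fin.append x y t.1 + Fin.append x y t.2.1
                = Fin.append x y t.2.2) ∧
            (∀ d ∈ O, Fin.append x y d = 1) := by
  refine ⟨15, fun l _ nq => ?_⟩
  obtain ⟨κ, _, A, O, hs, hx⟩ := PPDef.linear l nq
  let g : κ ≃ Fin (Fintype.card κ) := Fintype.equivFin κ
  let e : Fin l ⊕ κ → Fin (l + Fintype.card κ) :=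
    Sum.elim (Fin.castAdd _) (fun k => Fin.natAdd l (g k))
  have he (x : Fin l → ℝ) (y : Fin (Fintype.card κ) → ℝ) :
      Fin.append x y ∘ e = Sum.elim x (y ∘ g) := by
    ext (i | i) <;> simp [e]
  refine ⟨Fintype.card κ, A.map (mapTriple e), O.map e, ?_, fun x => (hx x).trans ?_⟩
  · simpa only [List.length_map, PPDef.cost] using hs
  · change _ ↔ ∃ y, Sat (Fin.append x y) (A.map (mapTriple e)) (O.map e)
    simp only [sat_map, he]
    exact (g.arrowCongr (Equiv.refl ℝ)).exists_congr_left.trans (by rfl)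
end
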